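/- Let t > δ_max, where δ_max is the largest diagonal entry of S (i.e., δ_max = max_i S_{ii}). Then the optimal value of problem (Pₜ) (minimizing qᵗ over [0,1]ⁿ) equals the optimal value of problem (P) (minimizing q over {0,1}ⁿ), and every minimizer of qᵗ over [0,1]ⁿ lies in {0,1}ⁿ. -/

import Mathlib

open Matrix Set

/-!
Along each coordinate direction `qᵗ` is a quadratic polynomial with leading coefficient
`S i i - t < 0`, hence strictly concave (`second_difference`), so a minimizer over the box cannot
have a coordinate strictly between `0` and `1`: moving that coordinate by a small `h` in one of
the two directions would decrease `qᵗ`. A minimizer exists by compactness; being Boolean, it is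
also a minimizer of `q` over the cube, since `qᵗ = q` there.
-/

/-- The second difference of `qᵗ` in the `i`-th coordinate direction is `2 (S i i - t) h²`. -/
lemma second_difference {n m : ℕ} (Q : Matrix (Fin m) (Fin n) ℝ) (q₁ : Fin m → ℝ)
    (q₂ : Fin n → ℝ) (τ : ℝ) (S : Matrix (Fin n) (Fin n) ℝ)
    (hSdef : S = Qᵀ * Q + τ • (1 : Matrix (Fin n) (Fin n) ℝ))
    (q qt : (Fin n → ℝ) → ℝ)
    (hq : ∀ u, q u = ∑ j, (Q.mulVec u j - q₁ j) ^ 2 + τ * ∑ i, (u i - q₂ i) ^ 2)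
    (t : ℝ) (hqt : ∀ u, qt u = q u + t * (∑ i, u i - ∑ i, (u i) ^ 2))
    (u : Fin n → ℝ) (i : Fin n) (h : ℝ) :
    qt (u + Pi.single i h) + qt (u - Pi.single i h) - 2 * qt u = 2 * (S i i - t) * h ^ 2 := by
  have hS : S i i = ∑ j, Q j i ^ 2 + τ := by
    simp [hSdef, Matrix.mul_apply, pow_two]
  have hv : ∑ k, (Pi.single i h : Fin n → ℝ) k ^ 2 = h ^ 2 := by
    rw [Finset.sum_eq_single i] <;> simp +contextual
  have hQ : ∑ j, ((Q *ᵥ (u + Pi.single i h)) j - q₁ j) ^ 2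
      + ∑ j, ((Q *ᵥ (u - Pi.single i h)) j - q₁ j) ^ 2
      = 2 * ∑ j, ((Q *ᵥ u) j - q₁ j) ^ 2 + 2 * (∑ j, Q j i ^ 2) * h ^ 2 := by
    simp only [Matrix.mulVec_add, Matrix.mulVec_sub, mul_assoc, Finset.sum_mul]
    simp only [Finset.mul_sum, ← Finset.sum_add_distrib]
    refine Finset.sum_congr rfl fun j _ => ?_
    have hj : (Q *ᵥ Pi.single i h) j = Q j i * h := by simp [mul_comm]
    rw [Pi.add_apply, Pi.sub_apply, hj]
    ring
  have h2 : ∑ k, ((u + Pi.single i h : Fin n → ℝ) k - q₂ k) ^ 2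
      + ∑ k, ((u - Pi.single i h : Fin n → ℝ) k - q₂ k) ^ 2
      = 2 * ∑ k, (u k - q₂ k) ^ 2 + 2 * h ^ 2 := by
    rw [← hv]
    simp only [Finset.mul_sum, ← Finset.sum_add_distrib]
    refine Finset.sum_congr rfl fun k _ => ?_
    rw [Pi.add_apply, Pi.sub_apply]
    ring
  have h3 : ∑ k, (u + Pi.single i h : Fin n → ℝ) k ^ 2
      + ∑ k, (u - Pi.single i h : Fin n → ℝ) k ^ 2
      = 2 * ∑ k, u k ^ 2 + 2 * h ^ 2 := by
    rw [← hv]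
    simp only [Finset.mul_sum, ← Finset.sum_add_distrib]
    refine Finset.sum_congr rfl fun k _ => ?_
    rw [Pi.add_apply, Pi.sub_apply]
    ring
  have h4 : ∑ k, (u + Pi.single i h : Fin n → ℝ) k
      + ∑ k, (u - Pi.single i h : Fin n → ℝ) k = 2 * ∑ k, u k := by
    simp only [Finset.mul_sum, ← Finset.sum_add_distrib]
    refine Finset.sum_congr rfl fun k _ => ?_
    rw [Pi.add_apply, Pi.sub_apply]
    ring
  rw [hqt, hqt, hqt, hq, hq, hq, hS]
  linear_combination hQ + τ * h2 + t * h4 - t * h3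

/-- If `t` exceeds the largest diagonal entry of `S = QᵀQ + τI`, then the
optimal value of minimizing `qᵗ` over `[0,1]ⁿ` equals the optimal value of minimizing `q`
over `{0,1}ⁿ`, and every minimizer of `qᵗ` over the box is Boolean. -/
theorem stmt_1 {n m : ℕ} (Q : Matrix (Fin m) (Fin n) ℝ) (q₁ : Fin m → ℝ) (q₂ : Fin n → ℝ)
    (τ : ℝ) (hτ : 0 ≤ τ)
    (S : Matrix (Fin n) (Fin n) ℝ)
    (hSdef : S = Qᵀ * Q + τ • (1 : Matrix (Fin n) (Fin n) ℝ))
    (q qt : (Fin n → ℝ) → ℝ)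
    (hq : ∀ u, q u = ∑ j, (Q.mulVec u j - q₁ j) ^ 2 + τ * ∑ i, (u i - q₂ i) ^ 2)
    (t : ℝ) (ht : ∀ i, S i i < t)
    (hqt : ∀ u, qt u = q u + t * (∑ i, u i - ∑ i, (u i) ^ 2)) :
    sInf (qt '' {u : Fin n → ℝ | ∀ i, u i ∈ Icc (0 : ℝ) 1})
      = sInf (q '' {u : Fin n → ℝ | ∀ i, u i = 0 ∨ u i = 1}) ∧
    ∀ u : Fin n → ℝ, (∀ i, u i ∈ Icc (0 : ℝ) 1) →
      IsMinOn qt {u : Fin n → ℝ | ∀ i, u i ∈ Icc (0 : ℝ) 1} u →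
      ∀ i, u i = 0 ∨ u i = 1 := by
  have hbool : ∀ u : Fin n → ℝ, (∀ i, u i ∈ Icc (0 : ℝ) 1) →
      IsMinOn qt {u : Fin n → ℝ | ∀ i, u i ∈ Icc (0 : ℝ) 1} u →
      ∀ i, u i = 0 ∨ u i = 1 := by
    intro u hu hmin i
    by_contra! hne
    have h0 : 0 < u i := lt_of_le_of_ne (hu i).1 hne.1.symm
    have h1 : u i < 1 := lt_of_le_of_ne (hu i).2 hne.2
    -- a positive step that keeps both `u ± h eᵢ` in the box
    obtain ⟨h, hpos, hl, hr⟩ : ∃ h : ℝ, 0 < h ∧ h ≤ u i ∧ h ≤ 1 - u i :=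
      ⟨min (u i) (1 - u i), lt_min h0 (by linarith), min_le_left _ _, min_le_right _ _⟩
    have hp : qt u ≤ qt (u + Pi.single i h) := by
      refine isMinOn_iff.1 hmin _ fun k => ?_
      rcases eq_or_ne k i with rfl | hk
      · simp only [Pi.add_apply, Pi.single_eq_same]
        constructor <;> linarith
      · simpa [hk] using hu k
    have hm : qt u ≤ qt (u - Pi.single i h) := by
      refine isMinOn_iff.1 hmin _ fun k => ?_
      rcases eq_or_ne k i with rfl | hk
      · simp only [Pi.sub_apply, Pi.single_eq_same]
        constructor <;> linarith
      · simpa [hk] using hu k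
    have hd := second_difference Q q₁ q₂ τ S hSdef q qt hq t hqt u i h
    have : 0 < (t - S i i) * h ^ 2 := mul_pos (sub_pos.2 (ht i)) (pow_pos hpos 2)
    linarith
  refine ⟨?_, hbool⟩
  have heq : ∀ u : Fin n → ℝ, (∀ i, u i = 0 ∨ u i = 1) → qt u = q u := by
    intro u hu
    have : ∑ i, u i = ∑ i, u i ^ 2 :=
      Finset.sum_congr rfl fun i _ => by rcases hu i with h | h <;> simp [h]
    rw [hqt, this]
    ring
  have hsub : ∀ u : Fin n → ℝ, (∀ i, u i = 0 ∨ u i = 1) → ∀ i, u i ∈ Icc (0 : ℝ) 1 := by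
    intro u hu i
    rcases hu i with h | h <;> simp [h]
  have hcpt : IsCompact {u : Fin n → ℝ | ∀ i, u i ∈ Icc (0 : ℝ) 1} :=
    isCompact_pi_infinite fun _ => isCompact_Icc
  have hcont : Continuous qt := by
    rw [funext hqt, funext hq]
    simp only [Matrix.mulVec, dotProduct]
    fun_prop
  obtain ⟨u, hu, hmin⟩ := hcpt.exists_isMinOn ⟨0, fun i => by simp⟩ hcont.continuousOn
  have hub := hbool u hu hmin
  have hA : IsLeast (qt '' {u : Fin n → ℝ | ∀ i, u i ∈ Icc (0 : ℝ) 1}) (qt u) :=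
    ⟨mem_image_of_mem _ hu, forall_mem_image.2 fun v hv => isMinOn_iff.1 hmin v hv⟩
  have hB : IsLeast (q '' {u : Fin n → ℝ | ∀ i, u i = 0 ∨ u i = 1}) (qt u) := by
    refine ⟨⟨u, hub, (heq u hub).symm⟩, forall_mem_image.2 fun v hv => ?_⟩
    rw [← heq v hv]
    exact isMinOn_iff.1 hmin v (hsub v hv)
  rw [hA.csInf_eq, hB.csInf_eq]
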